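/- Let u > −1 and z ∈ [0,1) be real numbers with z(1+u) < 1. Then the function v ↦ F(z,u,v) is twice differentiable at v = 1, and its second derivative there equals M₂(z,u) := −(8u/(1−z)²)·∫₀^z (1/(1−t(1+u)))·log(1/(1−t)) dt + 4u(1+u)²(1−z+2u−uz)/(1−z(1+u))³·log²(1/(1−z)) + 12u/((1−z)²(1+u)²)·log(1/(1−z(1+u))) + 4u·Ψ₁/((1−z)(1−z(1+u))³)·log(1/(1−z)) + 2u²z·Ψ₂/((1−z)²(1−z(1+u))³(1+u)), where Ψ₁ := −z²u² − 3z² − 5z²u + u³z² + 6z + 9zu + 2u²z − u³z − 3u² − 4u − 3 and Ψ₂ := −z³u³ + 3u³z² − 2u³z − 19u²z + 22z²u² + 6u² − 3z³u² + 14u − 3z³u − 46zu + 35z²u + 14 − 29z − z³ + 16z². -/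

import Mathlib

/-- `Ω = √(1 − 4(1+u)v(1−v))`. -/
noncomputable def OmegaR (u v : ℝ) : ℝ := Real.sqrt (1 - 4 * (1 + u) * v * (1 - v))

/-- The denominator of `Φ(z,u,v)`:
`(Ω + 1 − 2v(1+u) + (1−z)^Ω·(Ω − 1 + 2v(1+u)))·(1−z)`, with `(1−z)^Ω = exp(Ω·log(1−z))`. -/
noncomputable def denPhi (z u v : ℝ) : ℝ :=
  (OmegaR u v + 1 - 2 * v * (1 + u)
    + Real.exp (OmegaR u v * Real.log (1 - z)) * (OmegaR u v - 1 + 2 * v * (1 + u)))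
    * (1 - z)

/-- The explicit solution (4):
`Φ(z,u,v) = (Ω + 1 − 2v + (1−z)^Ω·(Ω − 1 + 2v)) / ((Ω + 1 − 2v(1+u) + (1−z)^Ω·(Ω − 1 + 2v(1+u)))·(1−z))`. -/
noncomputable def PhiR (z u v : ℝ) : ℝ :=
  (OmegaR u v + 1 - 2 * v
    + Real.exp (OmegaR u v * Real.log (1 - z)) * (OmegaR u v - 1 + 2 * v))
    / denPhi z u v

/-- The function (6):
`F(z,u,v) = (1 + 2z(v−1))/(1−z)² + (1−z)^{−2}·∫₀^z (∂Φ/∂t − (2v/(1−t))·Φ)·(1−t)² dt`. -/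
noncomputable def FR (z u v : ℝ) : ℝ :=
  (1 + 2 * z * (v - 1)) / (1 - z) ^ 2
    + ((1 - z) ^ 2)⁻¹ * ∫ t in (0 : ℝ)..z,
        (deriv (fun s => PhiR s u v) t - 2 * v / (1 - t) * PhiR t u v) * (1 - t) ^ 2

/-- `Ψ₁` of formula (9). -/
noncomputable def Psi1 (z u : ℝ) : ℝ :=
  -z ^ 2 * u ^ 2 - 3 * z ^ 2 - 5 * z ^ 2 * u + u ^ 3 * z ^ 2 + 6 * z + 9 * z * u
    + 2 * u ^ 2 * z - u ^ 3 * z - 3 * u ^ 2 - 4 * u - 3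

/-- `Ψ₂` of formula (9). -/
noncomputable def Psi2 (z u : ℝ) : ℝ :=
  -z ^ 3 * u ^ 3 + 3 * u ^ 3 * z ^ 2 - 2 * u ^ 3 * z - 19 * u ^ 2 * z + 22 * z ^ 2 * u ^ 2
    + 6 * u ^ 2 - 3 * z ^ 3 * u ^ 2 + 14 * u - 3 * z ^ 3 * u - 46 * z * u + 35 * z ^ 2 * u
    + 14 - 29 * z - z ^ 3 + 16 * z ^ 2

/-- The function `M₂(z,u)` of formula (9). -/
noncomputable def M2R (z u : ℝ) : ℝ :=
  -(8 * u / (1 - z) ^ 2)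
      * (∫ t in (0 : ℝ)..z, (1 / (1 - t * (1 + u))) * Real.log (1 / (1 - t)))
    + 4 * u * (1 + u) ^ 2 * (1 - z + 2 * u - u * z) / (1 - z * (1 + u)) ^ 3
        * Real.log (1 / (1 - z)) ^ 2
    + 12 * u / ((1 - z) ^ 2 * (1 + u) ^ 2) * Real.log (1 / (1 - z * (1 + u)))
    + 4 * u * Psi1 z u / ((1 - z) * (1 - z * (1 + u)) ^ 3) * Real.log (1 / (1 - z))
    + 2 * u ^ 2 * z * Psi2 z u / ((1 - z) ^ 2 * (1 - z * (1 + u)) ^ 3 * (1 + u))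

open Set Filter Topology MeasureTheory

/-- numerator -/
noncomputable def nN (u v t : ℝ) : ℝ :=
  OmegaR u v + 1 - 2 * v + Real.exp (OmegaR u v * Real.log (1 - t)) * (OmegaR u v - 1 + 2 * v)

/-- denominator -/
noncomputable def nD (u v t : ℝ) : ℝ :=
  OmegaR u v + 1 - 2 * v * (1 + u)
    + Real.exp (OmegaR u v * Real.log (1 - t)) * (OmegaR u v - 1 + 2 * v * (1 + u))

/-- derivative of `OmegaR` in `v` -/
noncomputable def O1 (u v : ℝ) : ℝ := 2 * (1 + u) * (2 * v - 1) / OmegaR u v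

/-- derivative of the numerator in `v` -/
noncomputable def nN1 (u v t : ℝ) : ℝ :=
  O1 u v - 2 + (Real.exp (OmegaR u v * Real.log (1 - t)) * (O1 u v * Real.log (1 - t))
      * (OmegaR u v - 1 + 2 * v)
    + Real.exp (OmegaR u v * Real.log (1 - t)) * (O1 u v + 2))

/-- derivative of the denominator in `v` -/
noncomputable def nD1 (u v t : ℝ) : ℝ :=
  O1 u v - 2 * (1 + u) + (Real.exp (OmegaR u v * Real.log (1 - t)) * (O1 u v * Real.log (1 - t))
      * (OmegaR u v - 1 + 2 * v * (1 + u))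
    + Real.exp (OmegaR u v * Real.log (1 - t)) * (O1 u v + 2 * (1 + u)))

/-- quotient -/
noncomputable def nq (u v t : ℝ) : ℝ := nN u v t / nD u v t

/-- derivative of the quotient in `v` -/
noncomputable def nq1 (u v t : ℝ) : ℝ :=
  (nN1 u v t * nD u v t - nN u v t * nD1 u v t) / nD u v t ^ 2

/-- the good region -/
def goodS (u : ℝ) : Set (ℝ × ℝ) :=
  {p | p.2 < 1 ∧ 0 < 1 - 4 * (1 + u) * p.1 * (1 - p.1) ∧ nD u p.1 p.2 ≠ 0}

lemma OmegaR_one (u : ℝ) : OmegaR u 1 = 1 := by simp [OmegaR]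

lemma O1_one (u : ℝ) : O1 u 1 = 2 * (1 + u) := by
  rw [O1, OmegaR_one]; ring

lemma nD_one (u t : ℝ) (ht : t < 1) : nD u 1 t = 2 * (1 - t * (1 + u)) := by
  rw [nD, OmegaR_one, one_mul, Real.exp_log (by linarith)]; ring

lemma nN_one (u t : ℝ) (ht : t < 1) : nN u 1 t = 2 * (1 - t) := by
  rw [nN, OmegaR_one, one_mul, Real.exp_log (by linarith)]; ring

lemma nD1_one (u t : ℝ) (ht : t < 1) : nD1 u 1 t =
    4 * (1 + u) ^ 2 * (1 - t) * Real.log (1 - t) + 4 * (1 + u) * (1 - t) := by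
  rw [nD1, O1_one, OmegaR_one, one_mul, Real.exp_log (by linarith)]; ring

lemma nN1_one (u t : ℝ) (ht : t < 1) : nN1 u 1 t =
    2 * u + 4 * (1 + u) * (1 - t) * Real.log (1 - t) + 2 * (1 - t) * (2 + u) := by
  rw [nN1, O1_one, OmegaR_one, one_mul, Real.exp_log (by linarith)]; ring

lemma cont_Omega (u : ℝ) : Continuous (OmegaR u) := by
  unfold OmegaR; fun_prop

lemma Omega_pos {u v : ℝ} (h : 0 < 1 - 4 * (1 + u) * v * (1 - v)) : 0 < OmegaR u v :=
  Real.sqrt_pos.2 h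

lemma contOn_nD (u : ℝ) : ContinuousOn (fun p : ℝ × ℝ => nD u p.1 p.2) {p | p.2 < 1} := by
  have := cont_Omega u
  unfold nD
  have h : ∀ p ∈ {p : ℝ × ℝ | p.2 < 1}, 1 - p.2 ≠ 0 := by
    intro p hp; simp only [mem_ofPred_eq] at hp; linarith
  fun_prop (disch := assumption)

lemma contOn_nN (u : ℝ) : ContinuousOn (fun p : ℝ × ℝ => nN u p.1 p.2) {p | p.2 < 1} := by
  have := cont_Omega u
  unfold nN
  have h : ∀ p ∈ {p : ℝ × ℝ | p.2 < 1}, 1 - p.2 ≠ 0 := by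
    intro p hp; simp only [mem_ofPred_eq] at hp; linarith
  fun_prop (disch := assumption)

lemma isOpen_goodS (u : ℝ) : IsOpen (goodS u) := by
  have h1 : IsOpen {p : ℝ × ℝ | p.2 < 1} := isOpen_lt continuous_snd continuous_const
  have h2 : IsOpen {p : ℝ × ℝ | 0 < 1 - 4 * (1 + u) * p.1 * (1 - p.1)} :=
    isOpen_lt continuous_const (by fun_prop)
  have h3 := (contOn_nD u).isOpen_inter_preimage h1 (isOpen_compl_singleton (x := (0 : ℝ)))
  have : goodS u = ({p : ℝ × ℝ | p.2 < 1} ∩ (fun p : ℝ × ℝ => nD u p.1 p.2) ⁻¹' {0}ᶜ) ∩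
      {p : ℝ × ℝ | 0 < 1 - 4 * (1 + u) * p.1 * (1 - p.1)} := by
    ext p; simp [goodS]; tauto
  rw [this]; exact h3.inter h2

lemma contOn_nq (u : ℝ) : ContinuousOn (fun p : ℝ × ℝ => nq u p.1 p.2) (goodS u) := by
  unfold nq
  have hN := (contOn_nN u).mono (t := goodS u) fun p hp => hp.1
  have hD := (contOn_nD u).mono (t := goodS u) fun p hp => hp.1
  exact hN.div hD fun p hp => hp.2.2

lemma contOn_nq1 (u : ℝ) : ContinuousOn (fun p : ℝ × ℝ => nq1 u p.1 p.2) (goodS u) := by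
  have hO := cont_Omega u
  have hN := (contOn_nN u).mono (t := goodS u) fun p hp => hp.1
  have hD := (contOn_nD u).mono (t := goodS u) fun p hp => hp.1
  have h : ∀ p ∈ goodS u, 1 - p.2 ≠ 0 := by
    intro p hp; have := hp.1; linarith
  have hO1 : ContinuousOn (fun p : ℝ × ℝ => O1 u p.1) (goodS u) := by
    unfold O1
    have h' : ∀ p ∈ goodS u, OmegaR u p.1 ≠ 0 := fun p hp => (Omega_pos hp.2.1).ne'
    fun_prop (disch := assumption)
  have hN1 : ContinuousOn (fun p : ℝ × ℝ => nN1 u p.1 p.2) (goodS u) := by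
    unfold nN1
    fun_prop (disch := assumption)
  have hD1 : ContinuousOn (fun p : ℝ × ℝ => nD1 u p.1 p.2) (goodS u) := by
    unfold nD1
    fun_prop (disch := assumption)
  unfold nq1
  exact ((hN1.mul hD).sub (hN.mul hD1)).div (hD.pow 2) fun p hp => pow_ne_zero 2 hp.2.2

lemma hasDeriv_Omega {u v : ℝ} (h : 0 < 1 - 4 * (1 + u) * v * (1 - v)) :
    HasDerivAt (OmegaR u) (O1 u v) v := by
  have h1 : HasDerivAt (fun v : ℝ => 1 - 4 * (1 + u) * v * (1 - v))
      (-(4 * (1 + u) * 1 * (1 - v) + 4 * (1 + u) * v * (-1))) v :=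
    ((((hasDerivAt_id v).const_mul (4 * (1 + u))).mul ((hasDerivAt_id v).const_sub 1)).const_sub 1)
  have h2 := h1.sqrt h.ne'
  have h3 := Omega_pos h
  refine h2.congr_deriv ?_
  unfold O1
  rw [OmegaR] at *
  field_simp
  ring

lemma hasDeriv_E {u v t : ℝ} (h : 0 < 1 - 4 * (1 + u) * v * (1 - v)) :
    HasDerivAt (fun v => Real.exp (OmegaR u v * Real.log (1 - t)))
      (Real.exp (OmegaR u v * Real.log (1 - t)) * (O1 u v * Real.log (1 - t))) v :=
  ((hasDeriv_Omega h).mul_const _).exp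

lemma hasDeriv_nN {u v t : ℝ} (h : 0 < 1 - 4 * (1 + u) * v * (1 - v)) :
    HasDerivAt (fun v => nN u v t) (nN1 u v t) v := by
  have hO := hasDeriv_Omega h
  have hE := hasDeriv_E (t := t) h
  have h2 := (hasDerivAt_id v).const_mul 2
  refine (((hO.add_const 1).sub h2).add (hE.mul ((hO.sub_const 1).add h2))).congr_deriv ?_
  unfold nN1; simp

lemma hasDeriv_nD {u v t : ℝ} (h : 0 < 1 - 4 * (1 + u) * v * (1 - v)) :
    HasDerivAt (fun v => nD u v t) (nD1 u v t) v := by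
  have hO := hasDeriv_Omega h
  have hE := hasDeriv_E (t := t) h
  have h2 := ((hasDerivAt_id v).const_mul 2).mul_const (1 + u)
  refine (((hO.add_const 1).sub h2).add (hE.mul ((hO.sub_const 1).add h2))).congr_deriv ?_
  unfold nD1; simp

lemma hasDeriv_nq {u v t : ℝ} (h : (v, t) ∈ goodS u) :
    HasDerivAt (fun v => nq u v t) (nq1 u v t) v :=
  (hasDeriv_nN h.2.1).div (hasDeriv_nD h.2.1) h.2.2

lemma hasDeriv_O1_one (u : ℝ) : HasDerivAt (O1 u) (4 * (1 + u) - 4 * (1 + u) ^ 2) 1 := by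
  have hO := hasDeriv_Omega (u := u) (v := 1) (by norm_num)
  have h1 := (((hasDerivAt_id (1 : ℝ)).const_mul 2).sub_const 1).const_mul (2 * (1 + u))
  refine (h1.div hO (by rw [OmegaR_one]; norm_num)).congr_deriv ?_
  rw [OmegaR_one, O1_one]; simp; ring

lemma hasDeriv_nN1_one (u t : ℝ) (ht : t < 1) : HasDerivAt (fun v => nN1 u v t)
    ((4 * (1 + u) - 4 * (1 + u) ^ 2) + ((1 - t) * (2 * (1 + u) * Real.log (1 - t)) *
      (2 * (1 + u) * Real.log (1 - t)) * 2
      + (1 - t) * ((4 * (1 + u) - 4 * (1 + u) ^ 2) * Real.log (1 - t)) * 2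
      + 2 * ((1 - t) * (2 * (1 + u) * Real.log (1 - t))) * (2 * (1 + u) + 2)
      + (1 - t) * (4 * (1 + u) - 4 * (1 + u) ^ 2))) 1 := by
  have hO := hasDeriv_Omega (u := u) (v := 1) (by norm_num)
  have hE := hasDeriv_E (u := u) (v := 1) (t := t) (by norm_num)
  have h2 := (hasDerivAt_id (1 : ℝ)).const_mul 2
  have hO1 := hasDeriv_O1_one u
  refine ((hO1.sub_const 2).add (((hE.mul (hO1.mul_const (Real.log (1 - t)))).mul
    ((hO.sub_const 1).add h2)).add (hE.mul (hO1.add_const 2)))).congr_deriv ?_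
  simp only [Pi.add_apply, Pi.mul_apply, id, O1_one, OmegaR_one, one_mul]
  rw [Real.exp_log (by linarith)]; ring

lemma hasDeriv_nD1_one (u t : ℝ) (ht : t < 1) : HasDerivAt (fun v => nD1 u v t)
    ((4 * (1 + u) - 4 * (1 + u) ^ 2) + ((1 - t) * (2 * (1 + u) * Real.log (1 - t)) *
      (2 * (1 + u) * Real.log (1 - t)) * (2 * (1 + u))
      + (1 - t) * ((4 * (1 + u) - 4 * (1 + u) ^ 2) * Real.log (1 - t)) * (2 * (1 + u))
      + 2 * ((1 - t) * (2 * (1 + u) * Real.log (1 - t))) * (2 * (1 + u) + 2 * (1 + u))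
      + (1 - t) * (4 * (1 + u) - 4 * (1 + u) ^ 2))) 1 := by
  have hO := hasDeriv_Omega (u := u) (v := 1) (by norm_num)
  have hE := hasDeriv_E (u := u) (v := 1) (t := t) (by norm_num)
  have h2 := ((hasDerivAt_id (1 : ℝ)).const_mul 2).mul_const (1 + u)
  have hO1 := hasDeriv_O1_one u
  refine ((hO1.sub_const (2 * (1 + u))).add (((hE.mul (hO1.mul_const (Real.log (1 - t)))).mul
    ((hO.sub_const 1).add h2)).add (hE.mul (hO1.add_const (2 * (1 + u)))))).congr_deriv ?_
  simp only [Pi.add_apply, Pi.mul_apply, id, O1_one, OmegaR_one, one_mul]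
  rw [Real.exp_log (by linarith)]; ring

/-- Differentiation under the integral sign. -/
lemma param_int (f f' : ℝ → ℝ → ℝ) (z r : ℝ) (hr : 0 < r) (hz : 0 ≤ z)
    (hf : ∀ v ∈ Metric.closedBall (1 : ℝ) r, ContinuousOn (f v) (Icc 0 z))
    (hf' : ContinuousOn (fun p : ℝ × ℝ => f' p.1 p.2) (Metric.closedBall (1 : ℝ) r ×ˢ Icc 0 z))
    (hd : ∀ v ∈ Metric.closedBall (1 : ℝ) r, ∀ t ∈ Icc 0 z,
      HasDerivAt (fun v => f v t) (f' v t) v) :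
    (∀ v ∈ Metric.ball (1 : ℝ) r,
      HasDerivAt (fun v => ∫ t in (0 : ℝ)..z, f v t) (∫ t in (0 : ℝ)..z, f' v t) v) ∧
    ContinuousAt (fun v => ∫ t in (0 : ℝ)..z, f' v t) 1 := by
  obtain ⟨C, hC⟩ := ((isCompact_closedBall (1 : ℝ) r).prod
    (isCompact_Icc (a := (0 : ℝ)) (b := z))).exists_bound_of_continuousOn hf'
  have hsub : ∀ t ∈ uIoc 0 z, t ∈ Icc 0 z := by
    intro t ht; rw [uIoc_of_le hz] at ht; exact Ioc_subset_Icc_self ht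
  have hmeas : ∀ g : ℝ → ℝ, ContinuousOn g (Icc 0 z) →
      AEStronglyMeasurable g (volume.restrict (uIoc 0 z)) := by
    intro g hg
    exact (hg.mono hsub).aestronglyMeasurable measurableSet_uIoc
  have hf'v : ∀ v ∈ Metric.closedBall (1 : ℝ) r, ContinuousOn (f' v) (Icc 0 z) := by
    intro v hv
    exact hf'.comp (f := fun t => (v, t)) (by fun_prop) fun t ht => ⟨hv, ht⟩
  constructor
  · intro v hv
    have hnhds : Metric.ball (1 : ℝ) r ∈ 𝓝 v := Metric.isOpen_ball.mem_nhds hv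
    have hv' := Metric.ball_subset_closedBall hv
    refine (intervalIntegral.hasDerivAt_integral_of_dominated_loc_of_deriv_le
      (bound := fun _ => C) hnhds ?_ ?_ ?_ ?_ ?_ ?_).2
    · filter_upwards [hnhds] with w hw
      exact hmeas _ (hf w (Metric.ball_subset_closedBall hw))
    · exact (hf v hv').intervalIntegrable_of_Icc hz
    · exact hmeas _ (hf'v v hv')
    · exact Eventually.of_forall fun t ht x hx =>
        hC (x, t) ⟨Metric.ball_subset_closedBall hx, hsub t ht⟩
    · exact intervalIntegrable_const
    · exact Eventually.of_forall fun t ht x hx =>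
        hd x (Metric.ball_subset_closedBall hx) t (hsub t ht)
  · have hnhds : Metric.ball (1 : ℝ) r ∈ 𝓝 (1 : ℝ) := Metric.ball_mem_nhds _ hr
    refine intervalIntegral.continuousAt_of_dominated_interval (bound := fun _ => C) ?_ ?_ ?_ ?_
    · filter_upwards [hnhds] with w hw
      exact hmeas _ (hf'v w (Metric.ball_subset_closedBall hw))
    · filter_upwards [hnhds] with w hw
      exact Eventually.of_forall fun t ht =>
        hC (w, t) ⟨Metric.ball_subset_closedBall hw, hsub t ht⟩
    · exact intervalIntegrable_const
    · refine Eventually.of_forall fun t ht => ?_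
      have : ContinuousOn (fun v => f' v t) (Metric.closedBall 1 r) :=
        hf'.comp (f := fun v => (v, t)) (by fun_prop) fun v hv => ⟨hv, hsub t ht⟩
      exact this.continuousAt (Metric.closedBall_mem_nhds _ hr)

lemma tube (u z : ℝ) (hu : -1 < u) (hz0 : 0 ≤ z) (hz1 : z < 1) (hzu : z * (1 + u) < 1) :
    ∃ r > 0, Metric.closedBall (1 : ℝ) r ×ˢ Icc 0 z ⊆ goodS u := by
  have hp : ({1} : Set ℝ) ×ˢ Icc 0 z ⊆ goodS u := by
    rintro ⟨v, t⟩ ⟨hv, ht⟩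
    simp only [mem_singleton_iff] at hv
    simp only [mem_Icc] at ht
    subst hv
    refine ⟨lt_of_le_of_lt ht.2 hz1, by norm_num, ?_⟩
    simp only
    rw [nD_one u t (by linarith)]
    nlinarith
  obtain ⟨U, W, hU, hW, h1, h2, h3⟩ := generalized_tube_lemma isCompact_singleton
    (isCompact_Icc (a := (0 : ℝ)) (b := z)) (isOpen_goodS u) hp
  obtain ⟨r, hr, hrU⟩ := Metric.nhds_basis_closedBall.mem_iff.1 (hU.mem_nhds (h1 rfl))
  exact ⟨r, hr, (prod_mono hrU h2).trans h3⟩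

lemma PhiR_eq (u v t : ℝ) : PhiR t u v = nq u v t / (1 - t) := by
  unfold PhiR denPhi nq nN nD
  rw [div_div]

lemma nq_zero {u v : ℝ} (h : (v, (0 : ℝ)) ∈ goodS u) : nq u v 0 = 1 := by
  have := Omega_pos h.2.1
  unfold nq nN nD
  simp only [sub_zero, Real.log_one, mul_zero, Real.exp_zero]
  rw [div_eq_one_iff_eq (by ring_nf; positivity)]
  ring

/-- derivative in `t` of nq -/
lemma contDiff_nq {u v z : ℝ} (h : ∀ t ∈ Icc 0 z, (v, t) ∈ goodS u) :
    ∃ g : ℝ → ℝ, ContinuousOn g (Icc 0 z) ∧ ∀ t ∈ Icc 0 z, HasDerivAt (nq u v) (g t) t := by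
  set O := OmegaR u v with hO
  let E : ℝ → ℝ := fun t => Real.exp (O * Real.log (1 - t))
  let E' : ℝ → ℝ := fun t => Real.exp (O * Real.log (1 - t)) * (O * (-1 / (1 - t)))
  have hcont : ∀ f : ℝ → ℝ → ℝ, ContinuousOn (fun p : ℝ × ℝ => f p.1 p.2) {p | p.2 < 1} →
      ContinuousOn (f v) (Icc 0 z) := fun f hf =>
    hf.comp (f := fun t => (v, t)) (by fun_prop) fun t ht => (h t ht).1
  have hN := hcont _ (contOn_nN u)
  have hD := hcont _ (contOn_nD u)
  have hne : ∀ t ∈ Icc 0 z, 1 - t ≠ 0 := fun t ht => by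
    have := (h t ht).1; simp only at this; linarith
  have hE' : ContinuousOn E' (Icc 0 z) := by
    fun_prop (disch := assumption)
  refine ⟨fun t => (E' t * (O - 1 + 2 * v) * nD u v t
    - nN u v t * (E' t * (O - 1 + 2 * v * (1 + u)))) / nD u v t ^ 2, ?_, ?_⟩
  · exact (((hE'.mul continuousOn_const).mul hD).sub (hN.mul (hE'.mul continuousOn_const))).div
      (hD.pow 2) fun t ht => pow_ne_zero 2 (h t ht).2.2
  · intro t ht
    have hE : HasDerivAt E (E' t) t :=
      ((((hasDerivAt_id t).const_sub 1).log (hne t ht)).const_mul O).exp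
    have h1 : HasDerivAt (nN u v) (E' t * (O - 1 + 2 * v)) t :=
      (hE.mul_const (O - 1 + 2 * v)).const_add (O + 1 - 2 * v)
    have h2 : HasDerivAt (nD u v) (E' t * (O - 1 + 2 * v * (1 + u))) t :=
      (hE.mul_const (O - 1 + 2 * v * (1 + u))).const_add (O + 1 - 2 * v * (1 + u))
    exact h1.div h2 (h t ht).2.2

/-- Integration by parts formula for `FR`. -/
lemma FR_eq {u v z : ℝ} (hz0 : 0 ≤ z) (hz1 : z < 1) (h : ∀ t ∈ Icc 0 z, (v, t) ∈ goodS u) :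
    FR z u v = 2 * z * (v - 1) / (1 - z) ^ 2 + nq u v z / (1 - z)
      + 2 * (1 - v) / (1 - z) ^ 2 * ∫ t in (0 : ℝ)..z, nq u v t := by
  obtain ⟨g, hg, hd⟩ := contDiff_nq h
  have hq : ContinuousOn (nq u v) (Icc 0 z) := fun t ht =>
    (hd t ht).continuousAt.continuousWithinAt
  have hne : ∀ t ∈ Icc 0 z, 1 - t ≠ 0 := fun t ht => by
    have := (h t ht).1; simp only at this; linarith
  have hint : ∫ t in (0 : ℝ)..z,
        (deriv (fun s => PhiR s u v) t - 2 * v / (1 - t) * PhiR t u v) * (1 - t) ^ 2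
      = ∫ t in (0 : ℝ)..z, ((g t * (1 - t) - nq u v t) + 2 * (1 - v) * nq u v t) := by
    refine intervalIntegral.integral_congr fun t ht => ?_
    rw [uIcc_of_le hz0] at ht
    have h1 := hne t ht
    have h2 : HasDerivAt (fun s => PhiR s u v)
        ((g t * (1 - t) - nq u v t * (-1)) / (1 - t) ^ 2) t := by
      simp only [PhiR_eq]
      exact (hd t ht).div ((hasDerivAt_id t).const_sub 1) h1
    rw [h2.deriv, PhiR_eq]
    field_simp
    ring
  have hi1 : IntervalIntegrable (fun t => g t * (1 - t) - nq u v t) volume 0 z :=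
    ContinuousOn.intervalIntegrable_of_Icc hz0 (by fun_prop)
  have hi2 : IntervalIntegrable (fun t => 2 * (1 - v) * nq u v t) volume 0 z :=
    ContinuousOn.intervalIntegrable_of_Icc hz0 (by fun_prop)
  have hF : ∫ t in (0 : ℝ)..z, (g t * (1 - t) - nq u v t)
      = nq u v z * (1 - z) - nq u v 0 * (1 - 0) := by
    refine intervalIntegral.integral_eq_sub_of_hasDerivAt (f := fun t => nq u v t * (1 - t)) ?_ hi1
    intro t ht
    rw [uIcc_of_le hz0] at ht
    refine ((hd t ht).mul ((hasDerivAt_id t).const_sub 1)).congr_deriv ?_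
    simp; ring
  unfold FR
  rw [hint, intervalIntegral.integral_add hi1 hi2, hF, intervalIntegral.integral_const_mul,
    nq_zero (h 0 ⟨le_rfl, hz0⟩)]
  have : 1 - z ≠ 0 := by linarith
  field_simp
  ring

/-- Evaluation of the integral of the first derivative. -/
lemma int_nq1 {u z : ℝ} (hu : -1 < u) (hz0 : 0 ≤ z) (hz1 : z < 1) (hzu : z * (1 + u) < 1) :
    -4 * ∫ t in (0 : ℝ)..z, nq1 u 1 t =
      -8 * u * (∫ t in (0 : ℝ)..z, (1 / (1 - t * (1 + u))) * Real.log (1 / (1 - t)))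
      + (8 * u / (1 + u) * (u * Real.log (1 - z) / (1 - z * (1 + u)) + Real.log (1 - z))
        - 12 * u / (1 + u) ^ 2 * Real.log (1 - z * (1 + u))
        - 4 * (u * z / (1 + u) - 2 * u ^ 2 / (1 + u) ^ 2 * (1 / (1 - z * (1 + u)) - 1))) := by
  have ha : 1 + u ≠ 0 := by linarith
  have hx : ∀ t ∈ Icc 0 z, 1 - t ≠ 0 := fun t ht => by
    have := ht.2; linarith
  have hy : ∀ t ∈ Icc 0 z, 1 - t * (1 + u) ≠ 0 := fun t ht => by
    have := ht.2; nlinarith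
  let G : ℝ → ℝ := fun t =>
    8 * u / (1 + u) * (u * Real.log (1 - t) / (1 - t * (1 + u)) + Real.log (1 - t))
        - 12 * u / (1 + u) ^ 2 * Real.log (1 - t * (1 + u))
        - 4 * (u * t / (1 + u) - 2 * u ^ 2 / (1 + u) ^ 2 * (1 / (1 - t * (1 + u)) - 1))
  let G' : ℝ → ℝ := fun t =>
    8 * u / (1 + u) * ((u * (-1 / (1 - t)) * (1 - t * (1 + u)) - u * Real.log (1 - t) * (-(1 + u)))
        / (1 - t * (1 + u)) ^ 2 + (-1 / (1 - t)))
        - 12 * u / (1 + u) ^ 2 * (-(1 + u) / (1 - t * (1 + u)))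
        - 4 * (u / (1 + u) - 2 * u ^ 2 / (1 + u) ^ 2 * ((1 + u) / (1 - t * (1 + u)) ^ 2))
  have hGd : ∀ t ∈ Icc 0 z, HasDerivAt G (G' t) t := by
    intro t ht
    have hl := ((hasDerivAt_id t).const_sub 1).log (hx t ht)
    have hyd : HasDerivAt (fun t : ℝ => 1 - t * (1 + u)) (-(1 + u)) t := by
      simpa using ((hasDerivAt_id t).mul_const (1 + u)).const_sub 1
    have hly := hyd.log (hy t ht)
    have hyi := ((hasDerivAt_const t (1 : ℝ)).div hyd (hy t ht)).sub_const 1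
    have ht1 := ((hasDerivAt_id t).const_mul u).div_const (1 + u)
    refine ((((((hl.const_mul u).div hyd (hy t ht)).add hl).const_mul (8 * u / (1 + u))).sub
      (hly.const_mul (12 * u / (1 + u) ^ 2))).sub
      ((ht1.sub (hyi.const_mul (2 * u ^ 2 / (1 + u) ^ 2))).const_mul 4)).congr_deriv ?_
    simp [G']
  have hG'c : ContinuousOn G' (Icc 0 z) := by
    have hy2 : ∀ t ∈ Icc 0 z, (1 - t * (1 + u)) ^ 2 ≠ 0 := fun t ht => pow_ne_zero 2 (hy t ht)
    fun_prop (disch := assumption)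
  have hLc : ContinuousOn (fun t => (1 / (1 - t * (1 + u))) * Real.log (1 / (1 - t))) (Icc 0 z) := by
    simp only [one_div, Real.log_inv]
    fun_prop (disch := assumption)
  have hGi := hG'c.intervalIntegrable_of_Icc (μ := volume) hz0
  have hLi := (hLc.intervalIntegrable_of_Icc (μ := volume) hz0).const_mul (-8 * u)
  have hFT : ∫ t in (0 : ℝ)..z, G' t = G z - G 0 := by
    refine intervalIntegral.integral_eq_sub_of_hasDerivAt ?_ hGi
    intro t ht
    rw [uIcc_of_le hz0] at ht
    exact hGd t ht
  have hG0 : G 0 = 0 := by simp [G]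
  rw [hG0, sub_zero] at hFT
  change _ = _ + G z
  rw [← hFT, ← intervalIntegral.integral_const_mul, ← intervalIntegral.integral_const_mul,
    ← intervalIntegral.integral_add hLi hGi]
  refine intervalIntegral.integral_congr fun t ht => ?_
  rw [uIcc_of_le hz0] at ht
  have h1 := hx t ht
  have h2 := hy t ht
  have ht1 : t < 1 := by have := ht.2; linarith
  simp only [G', nq1]
  rw [nD_one u t ht1, nN_one u t ht1, nD1_one u t ht1, nN1_one u t ht1, one_div (1 - t),
    Real.log_inv]
  obtain ⟨y, hyd⟩ : ∃ y, y = 1 - t * (1 + u) := ⟨_, rfl⟩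
  rw [← hyd] at h2 ⊢
  field_simp
  rw [hyd]
  ring

/-- The function `v ↦ F(z,u,v)` is twice differentiable at `v = 1`, and its second
derivative there equals `M₂(z,u)`. -/
theorem deriv2_F_at_one (u z : ℝ) (hu : -1 < u) (hz : z ∈ Set.Ico (0 : ℝ) 1)
    (hzu : z * (1 + u) < 1) :
    HasDerivAt (fun v => deriv (fun w => FR z u w) v) (M2R z u) 1 := by
  obtain ⟨hz0, hz1⟩ := hz
  obtain ⟨r, hr, hsub⟩ := tube u z hu hz0 hz1 hzu
  have hg : ∀ v ∈ Metric.closedBall (1 : ℝ) r, ∀ t ∈ Icc 0 z, (v, t) ∈ goodS u :=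
    fun v hv t ht => hsub ⟨hv, ht⟩
  have hzm : z ∈ Icc 0 z := ⟨hz0, le_rfl⟩
  obtain ⟨hI, hIc⟩ := param_int (nq u) (nq1 u) z r hr hz0
    (fun v hv => (contOn_nq u).comp (f := fun t => (v, t)) (by fun_prop) fun t ht => hg v hv t ht)
    ((contOn_nq1 u).mono hsub) (fun v hv t ht => hasDeriv_nq (hg v hv t ht))
  set I : ℝ → ℝ := fun v => ∫ t in (0 : ℝ)..z, nq u v t with hIdef
  set J : ℝ → ℝ := fun v => ∫ t in (0 : ℝ)..z, nq1 u v t with hJdef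
  have hball : Metric.ball (1 : ℝ) r ∈ 𝓝 (1 : ℝ) := Metric.ball_mem_nhds _ hr
  have hF1 : ∀ v ∈ Metric.ball (1 : ℝ) r, deriv (fun w => FR z u w) v =
      2 * z / (1 - z) ^ 2 + nq1 u v z / (1 - z)
        + (-2 / (1 - z) ^ 2 * I v + 2 * (1 - v) / (1 - z) ^ 2 * J v) := by
    intro v hv
    have hev : (fun w => FR z u w) =ᶠ[𝓝 v] fun w => 2 * z * (w - 1) / (1 - z) ^ 2
        + nq u w z / (1 - z) + 2 * (1 - w) / (1 - z) ^ 2 * I w := by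
      filter_upwards [Metric.isOpen_ball.mem_nhds hv] with w hw
      exact FR_eq hz0 hz1 (hg w (Metric.ball_subset_closedBall hw))
    rw [hev.deriv_eq]
    have h1 := (((hasDerivAt_id v).sub_const 1).const_mul (2 * z)).div_const ((1 - z) ^ 2)
    have h2 := (hasDeriv_nq (hg v (Metric.ball_subset_closedBall hv) z hzm)).div_const (1 - z)
    have h3 := ((((hasDerivAt_id v).const_sub 1).const_mul 2).div_const ((1 - z) ^ 2)).mul (hI v hv)
    refine (((h1.add h2).add h3).congr_deriv ?_).deriv
    simp [I, J]
  have hev : (fun v => deriv (fun w => FR z u w) v) =ᶠ[𝓝 1] fun v =>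
      2 * z / (1 - z) ^ 2 + nq1 u v z / (1 - z)
        + (-2 / (1 - z) ^ 2 * I v + 2 * (1 - v) / (1 - z) ^ 2 * J v) := by
    filter_upwards [hball] with v hv using hF1 v hv
  refine HasDerivAt.congr_of_eventuallyEq ?_ hev
  -- derivative of `(1 - v) * J v` at 1
  have hJ : HasDerivAt (fun v => 2 * (1 - v) / (1 - z) ^ 2 * J v) (-2 / (1 - z) ^ 2 * J 1) 1 := by
    rw [hasDerivAt_iff_tendsto_slope]
    have : Tendsto (fun v => -2 / (1 - z) ^ 2 * J v) (𝓝[≠] 1) (𝓝 (-2 / (1 - z) ^ 2 * J 1)) :=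
      (hIc.tendsto.mono_left nhdsWithin_le_nhds).const_mul _
    refine this.congr' ?_
    filter_upwards [self_mem_nhdsWithin] with v hv
    have hv1 : v - 1 ≠ 0 := sub_ne_zero.2 hv
    have hz' : 1 - z ≠ 0 := by linarith
    rw [slope_def_field]
    field_simp
    ring
  have hgood := hg 1 (Metric.mem_closedBall_self hr.le) z hzm
  have hq2 := ((((hasDeriv_nN1_one u z hz1).mul (hasDeriv_nD (t := z) hgood.2.1)).sub
    ((hasDeriv_nN (t := z) hgood.2.1).mul (hasDeriv_nD1_one u z hz1))).div
    ((hasDeriv_nD (t := z) hgood.2.1).pow 2) (pow_ne_zero 2 hgood.2.2)).div_const (1 - z)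
  have hI1 := (hI 1 (Metric.mem_ball_self hr)).const_mul (-2 / (1 - z) ^ 2)
  refine ((hq2.const_add (2 * z / (1 - z) ^ 2)).add (hI1.add hJ)).congr_deriv ?_
  have hint := int_nq1 hu hz0 hz1 hzu
  have hx : 1 - z ≠ 0 := by linarith
  have hy : 1 - z * (1 + u) ≠ 0 := by linarith
  have ha : 1 + u ≠ 0 := by linarith
  have e1 : -2 / (1 - z) ^ 2 * (∫ t in (0 : ℝ)..z, nq1 u 1 t) + -2 / (1 - z) ^ 2 * J 1
      = (-4 * ∫ t in (0 : ℝ)..z, nq1 u 1 t) / (1 - z) ^ 2 := by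
    simp only [J]; ring
  rw [e1, hint]
  unfold M2R
  generalize (∫ t in (0 : ℝ)..z, (1 / (1 - t * (1 + u))) * Real.log (1 / (1 - t))) = K
  simp only [Pi.mul_apply, Pi.sub_apply, Pi.pow_apply]
  rw [nD_one u z hz1, nN_one u z hz1, nD1_one u z hz1, nN1_one u z hz1, one_div (1 - z),
    one_div (1 - z * (1 + u)), Real.log_inv, Real.log_inv]
  unfold Psi1 Psi2
  generalize Real.log (1 - z) = L
  generalize Real.log (1 - z * (1 + u)) = L2
  obtain ⟨y, hyd⟩ : ∃ y, y = 1 - z * (1 + u) := ⟨_, rfl⟩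
  rw [← hyd] at hy ⊢
  field_simp
  rw [hyd]
  ring
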